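/- Let m ≥ 2, let F be an averaging operator, let f : 𝕋_m → ℝ be bounded, and let T > 0. If u₁, u₂ : 𝕋_m × [0,T] → ℝ are bounded and continuous in t for each x, then sup_{(x,t) ∈ 𝕋_m × [0,T]} |K_f u₁(x,t) − K_f u₂(x,t)| ≤ (1 − e^{−T}) · sup_{(x,t) ∈ 𝕋_m × [0,T]} |u₁(x,t) − u₂(x,t)|. -/

import Mathlib

open MeasureTheory Real

/-- `F : ℝ^m → ℝ` is an averaging operator: continuous, `F(0,…,0)=0`, `F(1,…,1)=1`,
positively homogeneous, translation equivariant, strictly below the max when the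
coordinates are not all equal, and nondecreasing in each variable. -/
def IsAveraging (m : ℕ) (F : (Fin m → ℝ) → ℝ) : Prop :=
  Continuous F ∧
  F (fun _ => 0) = 0 ∧
  F (fun _ => 1) = 1 ∧
  (∀ (t : ℝ) (x : Fin m → ℝ), F (fun j => t * x j) = t * F x) ∧
  (∀ (t : ℝ) (x : Fin m → ℝ), F (fun j => t + x j) = t + F x) ∧
  (∀ x : Fin m → ℝ, (∃ i j, x i ≠ x j) → F x < ⨆ j, x j) ∧
  (∀ x y : Fin m → ℝ, (∀ j, x j ≤ y j) → F x ≤ F y)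

/-- The operator `K_f u(x,t) = ∫₀ᵗ e^{z−t} F(u((x,0),z),…,u((x,m−1),z)) dz + e^{−t} f(x)`,
where vertices of the directed tree `𝕋_m` are modeled as lists over `Fin m`
and `(x,i)` is the successor `x ++ [i]`. -/
noncomputable def Kop (m : ℕ) (F : (Fin m → ℝ) → ℝ) (f : List (Fin m) → ℝ)
    (u : List (Fin m) → ℝ → ℝ) (x : List (Fin m)) (t : ℝ) : ℝ :=
  (∫ z in (0:ℝ)..t, Real.exp (z - t) * F (fun i => u (x ++ [i]) z)) +
    Real.exp (-t) * f x

/-!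
An averaging operator is monotone and commutes with adding constants, hence is 1-Lipschitz for the
sup norm on `ℝ^m`. So the integrands of `K_f u₁` and `K_f u₂` at time `z` differ by at most
`e^{z-t} sup |u₁ - u₂|`, while the terms in `f` cancel, and `∫₀ᵗ e^{z-t} dz = 1 - e^{-t}`.
-/

open scoped NNReal

theorem lipschitzWith_one_of_monotone_of_map_const_add {ι : Type*} [Fintype ι]
    {F : (ι → ℝ) → ℝ} (hmono : Monotone F)
    (hadd : ∀ (t : ℝ) (x : ι → ℝ), F (fun j => t + x j) = t + F x) : LipschitzWith 1 F := by
  refine LipschitzWith.of_le_add fun x y => ?_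
  calc
    F x ≤ F (fun j => dist x y + y j) := hmono fun j =>
      sub_le_iff_le_add.1 ((Real.sub_le_dist (x j) (y j)).trans (dist_le_pi_dist x y j))
    _ = F y + dist x y := by rw [hadd, add_comm]

theorem IsAveraging.lipschitzWith_one {m : ℕ} {F : (Fin m → ℝ) → ℝ} (hF : IsAveraging m F) :
    LipschitzWith 1 F := by
  obtain ⟨-, -, -, -, hadd, -, hmono⟩ := hF
  exact lipschitzWith_one_of_monotone_of_map_const_add hmono hadd

theorem integrable_comp_of_lipschitzWith {α E G : Type*} [MeasurableSpace α] {μ : Measure α}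
    [IsFiniteMeasure μ] [NormedAddCommGroup E] [NormedAddCommGroup G] {K : ℝ≥0} {F : E → G}
    {g : α → E} (hF : LipschitzWith K F) (hg : Integrable g μ) :
    Integrable (fun a => F (g a)) μ := by
  have hshift : LipschitzWith K fun v => F v - F 0 :=
    LipschitzWith.of_dist_le_mul fun v w => by simpa using hF.dist_le_mul v w
  have hsub : Integrable (fun a => F (g a) - F 0) μ :=
    memLp_one_iff_integrable.1
      (hshift.comp_memLp (sub_self _) (memLp_one_iff_integrable.2 hg))
  exact (hsub.add (integrable_const (F 0))).congr (.of_forall fun _ => sub_add_cancel _ _)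

theorem intervalIntegrable_comp_pi_of_lipschitzWith {ι E G : Type*} [Fintype ι]
    [NormedAddCommGroup E] [NormedAddCommGroup G] {K : ℝ≥0} {F : (ι → E) → G} {g : ι → ℝ → E}
    {a b : ℝ} (hF : LipschitzWith K F)
    (hg : ∀ i, IntervalIntegrable (g i) volume a b) :
    IntervalIntegrable (fun z => F fun i => g i z) volume a b :=
  ⟨integrable_comp_of_lipschitzWith hF (Integrable.of_eval fun i => (hg i).1),
    integrable_comp_of_lipschitzWith hF (Integrable.of_eval fun i => (hg i).2)⟩

theorem integral_exp_sub_right (a t : ℝ) : ∫ z in a..t, exp (z - t) = 1 - exp (a - t) := by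
  rw [intervalIntegral.integral_comp_sub_right exp, integral_exp, sub_self, exp_zero]

theorem abs_integral_exp_mul_sub_le {g₁ g₂ : ℝ → ℝ} {a t C : ℝ} (hat : a ≤ t)
    (hg₁ : IntervalIntegrable g₁ volume a t) (hg₂ : IntervalIntegrable g₂ volume a t)
    (hC : ∀ z ∈ Set.Ioc a t, |g₁ z - g₂ z| ≤ C) :
    |(∫ z in a..t, exp (z - t) * g₁ z) - ∫ z in a..t, exp (z - t) * g₂ z| ≤
      (1 - exp (a - t)) * C := by
  have hexp : Continuous fun z : ℝ => exp (z - t) := by fun_prop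
  calc
    _ = ‖∫ z in a..t, exp (z - t) * (g₁ z - g₂ z)‖ := by
      simp only [mul_sub]
      rw [intervalIntegral.integral_sub (hg₁.continuousOn_mul hexp.continuousOn)
        (hg₂.continuousOn_mul hexp.continuousOn), Real.norm_eq_abs]
    _ ≤ ∫ z in a..t, exp (z - t) * C := by
      refine intervalIntegral.norm_integral_le_of_norm_le hat (.of_forall fun z hz => ?_)
        ((hexp.mul continuous_const).intervalIntegrable _ _)
      rw [norm_mul, Real.norm_of_nonneg (exp_nonneg _)]
      exact mul_le_mul_of_nonneg_left (hC z hz) (exp_nonneg _)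
    _ = (1 - exp (a - t)) * C := by
      rw [intervalIntegral.integral_mul_const, integral_exp_sub_right]

theorem abs_Kop_sub_Kop_le {m : ℕ} {K : ℝ≥0} {F : (Fin m → ℝ) → ℝ} (hF : LipschitzWith K F)
    (f : List (Fin m) → ℝ) {u₁ u₂ : List (Fin m) → ℝ → ℝ} {x : List (Fin m)} {t S : ℝ}
    (ht : 0 ≤ t) (hS : 0 ≤ S)
    (hu₁ : ∀ i, IntervalIntegrable (u₁ (x ++ [i])) volume 0 t)
    (hu₂ : ∀ i, IntervalIntegrable (u₂ (x ++ [i])) volume 0 t)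
    (hu : ∀ i, ∀ z ∈ Set.Ioc 0 t, |u₁ (x ++ [i]) z - u₂ (x ++ [i]) z| ≤ S) :
    |Kop m F f u₁ x t - Kop m F f u₂ x t| ≤ (1 - exp (-t)) * (K * S) := by
  rw [Kop, Kop, add_sub_add_right_eq_sub, ← zero_sub t]
  refine abs_integral_exp_mul_sub_le ht (intervalIntegrable_comp_pi_of_lipschitzWith hF hu₁)
    (intervalIntegrable_comp_pi_of_lipschitzWith hF hu₂) fun z hz => ?_
  exact hF.dist_le_mul_of_le ((dist_pi_le_iff hS).2 fun i => hu i z hz)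

theorem statement7_general {m : ℕ} {K : ℝ≥0} {F : (Fin m → ℝ) → ℝ} (hF : LipschitzWith K F)
    (f : List (Fin m) → ℝ) {T : ℝ} (hT : 0 ≤ T) {u₁ u₂ : List (Fin m) → ℝ → ℝ}
    (hb : ∃ M : ℝ, ∀ x, ∀ t ∈ Set.Icc (0 : ℝ) T, |u₁ x t - u₂ x t| ≤ M)
    (hu₁ : ∀ x, IntervalIntegrable (u₁ x) volume 0 T)
    (hu₂ : ∀ x, IntervalIntegrable (u₂ x) volume 0 T) :
    (⨆ x : List (Fin m), ⨆ t : Set.Icc (0 : ℝ) T,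
        |Kop m F f u₁ x (t : ℝ) - Kop m F f u₂ x (t : ℝ)|) ≤
      K * (1 - exp (-T)) *
        ⨆ x : List (Fin m), ⨆ t : Set.Icc (0 : ℝ) T, |u₁ x (t : ℝ) - u₂ x (t : ℝ)| := by
  obtain ⟨M, hM⟩ := hb
  have : Nonempty (Set.Icc (0 : ℝ) T) := ⟨0, le_rfl, hT⟩
  set S := ⨆ x : List (Fin m), ⨆ t : Set.Icc (0 : ℝ) T, |u₁ x (t : ℝ) - u₂ x (t : ℝ)|
  have hS : 0 ≤ S := Real.iSup_nonneg fun x => Real.iSup_nonneg fun t => abs_nonneg _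
  have hbdd : BddAbove (⋃ x, Set.range fun t : Set.Icc (0 : ℝ) T => |u₁ x t - u₂ x t|) :=
    ⟨M, Set.iUnion_subset fun x => Set.range_subset_iff.2 fun t => hM x t t.2⟩
  have hle : ∀ x, ∀ t ∈ Set.Icc (0 : ℝ) T, |u₁ x t - u₂ x t| ≤ S := fun x t ht =>
    le_ciSup₂ hbdd x ⟨t, ht⟩
  refine ciSup_le fun x => ciSup_le fun ⟨t, ht₀, htT⟩ => ?_
  have hsub : Set.uIcc 0 t ⊆ Set.uIcc 0 T := by
    simpa only [Set.uIcc_of_le ht₀, Set.uIcc_of_le hT] using Set.Icc_subset_Icc_right htT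
  calc
    |Kop m F f u₁ x t - Kop m F f u₂ x t| ≤ (1 - exp (-t)) * (K * S) :=
      abs_Kop_sub_Kop_le hF f ht₀ hS (fun i => (hu₁ _).mono_set hsub)
        (fun i => (hu₂ _).mono_set hsub) fun i z hz => hle _ z ⟨hz.1.le, hz.2.trans htT⟩
    _ ≤ (1 - exp (-T)) * (K * S) := by gcongr
    _ = K * (1 - exp (-T)) * S := by ring

/-- `K_f` is a contraction on `𝕋_m × [0,T]` with constant `1 − e^{−T}`. -/
theorem statement7 (m : ℕ) (hm : 2 ≤ m) (F : (Fin m → ℝ) → ℝ) (hF : IsAveraging m F)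
    (f : List (Fin m) → ℝ) (hf : ∃ M : ℝ, ∀ x, |f x| ≤ M)
    (T : ℝ) (hT : 0 < T)
    (u₁ u₂ : List (Fin m) → ℝ → ℝ)
    (hb₁ : ∃ M : ℝ, ∀ x, ∀ t ∈ Set.Icc (0:ℝ) T, |u₁ x t| ≤ M)
    (hb₂ : ∃ M : ℝ, ∀ x, ∀ t ∈ Set.Icc (0:ℝ) T, |u₂ x t| ≤ M)
    (hc₁ : ∀ x, ContinuousOn (u₁ x) (Set.Icc (0:ℝ) T))
    (hc₂ : ∀ x, ContinuousOn (u₂ x) (Set.Icc (0:ℝ) T)) :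
    (⨆ x : List (Fin m), ⨆ t : Set.Icc (0:ℝ) T,
        |Kop m F f u₁ x (t : ℝ) - Kop m F f u₂ x (t : ℝ)|) ≤
      (1 - Real.exp (-T)) *
        ⨆ x : List (Fin m), ⨆ t : Set.Icc (0:ℝ) T, |u₁ x (t : ℝ) - u₂ x (t : ℝ)| := by
  obtain ⟨M₁, hM₁⟩ := hb₁
  obtain ⟨M₂, hM₂⟩ := hb₂
  have hb : ∃ M : ℝ, ∀ x, ∀ t ∈ Set.Icc (0 : ℝ) T, |u₁ x t - u₂ x t| ≤ M :=
    ⟨M₁ + M₂, fun x t ht => (abs_sub _ _).trans (add_le_add (hM₁ x t ht) (hM₂ x t ht))⟩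
  simpa using statement7_general hF.lipschitzWith_one f hT.le hb
    (fun x => (hc₁ x).intervalIntegrable_of_Icc hT.le)
    (fun x => (hc₂ x).intervalIntegrable_of_Icc hT.le)
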